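/- Let β be an alternating 2-form on ℝ⁷ satisfying Σ_{j,k=1}^{7} ε_{ijk} β(e_j,e_k) = 0 for every i ∈ {1,…,7}. Then there exist g ∈ GL(7,ℝ) with g*φ = φ and real numbers λ₁, λ₂ with 0 ≤ λ₁ ≤ λ₂ such that g*β = λ₁ e²∧e³ + λ₂ e⁴∧e⁵ − (λ₁+λ₂) e⁶∧e⁷. -/

import Mathlib

open scoped BigOperators Matrix

noncomputable section

namespace G2

/-- The standard basis vector `e i` of `ℝ⁷`. -/
def e (i : Fin 7) : Fin 7 → ℝ := fun j => if j = i then 1 else 0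

/-- The 3-form `e^a ∧ e^b ∧ e^c` (determinant convention), evaluated on `(x, y, z)`. -/
def w3 (a b c : Fin 7) (x y z : Fin 7 → ℝ) : ℝ :=
  x a * (y b * z c - y c * z b) - x b * (y a * z c - y c * z a)
    + x c * (y a * z b - y b * z a)

/-- The 4-form `e^a ∧ e^b ∧ e^c ∧ e^d`, evaluated on `(x, y, z, w)`. -/
def w4 (a b c d : Fin 7) (x y z w : Fin 7 → ℝ) : ℝ :=
  Matrix.det !![x a, x b, x c, x d; y a, y b, y c, y d;
                z a, z b, z c, z d; w a, w b, w c, w d]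

/-- The fundamental `G₂` 3-form
`φ = e^{123}+e^{145}+e^{167}+e^{246}-e^{257}-e^{347}-e^{356}` (indices shifted to start at 0),
as a trilinear alternating function of three vectors. -/
def phi (x y z : Fin 7 → ℝ) : ℝ :=
  w3 0 1 2 x y z + w3 0 3 4 x y z + w3 0 5 6 x y z + w3 1 3 5 x y z
    - w3 1 4 6 x y z - w3 2 3 6 x y z - w3 2 4 5 x y z

/-- The 4-form `ψ = *φ = e^{4567}+e^{2367}+e^{2345}+e^{1357}-e^{1346}-e^{1256}-e^{1247}`
(indices shifted to start at 0), as a function of four vectors. -/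
def psi (x y z w : Fin 7 → ℝ) : ℝ :=
  w4 3 4 5 6 x y z w + w4 1 2 5 6 x y z w + w4 1 2 3 4 x y z w + w4 0 2 4 6 x y z w
    - w4 0 2 3 5 x y z w - w4 0 1 4 5 x y z w - w4 0 1 3 6 x y z w

/-- `ε_{ijk} = φ(e_i, e_j, e_k)`. -/
def eps (i j k : Fin 7) : ℝ := phi (e i) (e j) (e k)

/-- `ε_{ijkl} = ψ(e_i, e_j, e_k, e_l)`. -/
def eps4 (i j k l : Fin 7) : ℝ := psi (e i) (e j) (e k) (e l)

/-- The volume form `e^1 ∧ ⋯ ∧ e^7`, evaluated on a 7-tuple of vectors. -/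
def vol (v : Fin 7 → (Fin 7 → ℝ)) : ℝ := Matrix.det (Matrix.of fun i j => v i j)

/-- The matrix `[v]` with `[v]_{ij} = Σ_k ε_{ijk} v_k`. -/
def bracket (v : Fin 7 → ℝ) : Matrix (Fin 7) (Fin 7) ℝ :=
  Matrix.of fun i j => ∑ k : Fin 7, eps i j k * v k

/-- The vector `⟨A⟩` with `⟨A⟩_i = Σ_{j,k} ε_{ijk} A_{jk}`. -/
def angle (A : Matrix (Fin 7) (Fin 7) ℝ) : Fin 7 → ℝ :=
  fun i => ∑ j : Fin 7, ∑ k : Fin 7, eps i j k * A j k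

/-- Wedge product of two 2-forms (determinant convention), evaluated on four vectors. -/
def wedge22 (A B : (Fin 7 → ℝ) → (Fin 7 → ℝ) → ℝ) (v : Fin 4 → (Fin 7 → ℝ)) : ℝ :=
  (1 / 4 : ℝ) * ∑ σ : Equiv.Perm (Fin 4),
    ((Equiv.Perm.sign σ : ℤ) : ℝ) * (A (v (σ 0)) (v (σ 1)) * B (v (σ 2)) (v (σ 3)))

/-- Wedge product of three 2-forms (determinant convention), evaluated on six vectors. -/
def wedge222 (A B C : (Fin 7 → ℝ) → (Fin 7 → ℝ) → ℝ) (v : Fin 6 → (Fin 7 → ℝ)) : ℝ :=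
  (1 / 8 : ℝ) * ∑ σ : Equiv.Perm (Fin 6),
    ((Equiv.Perm.sign σ : ℤ) : ℝ) *
      (A (v (σ 0)) (v (σ 1)) * B (v (σ 2)) (v (σ 3)) * C (v (σ 4)) (v (σ 5)))

/-- Wedge product of two 2-forms and a 3-form (determinant convention),
evaluated on seven vectors. -/
def wedge223 (A B : (Fin 7 → ℝ) → (Fin 7 → ℝ) → ℝ)
    (C : (Fin 7 → ℝ) → (Fin 7 → ℝ) → (Fin 7 → ℝ) → ℝ)
    (v : Fin 7 → (Fin 7 → ℝ)) : ℝ :=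
  (1 / 24 : ℝ) * ∑ σ : Equiv.Perm (Fin 7),
    ((Equiv.Perm.sign σ : ℤ) : ℝ) *
      (A (v (σ 0)) (v (σ 1)) * B (v (σ 2)) (v (σ 3)) * C (v (σ 4)) (v (σ 5)) (v (σ 6)))

/-- The map `i_φ : S²(ℝ⁷)* → Λ³(ℝ⁷)*`,
`i_φ(h) = Σ_{i,j,k,l} ε_{ikl} h_{ij} e^j ∧ e^k ∧ e^l`, evaluated on `(x, y, z)`. -/
def iphi (h : Fin 7 → Fin 7 → ℝ) (x y z : Fin 7 → ℝ) : ℝ :=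
  ∑ i : Fin 7, ∑ j : Fin 7, ∑ k : Fin 7, ∑ l : Fin 7, eps i k l * h i j * w3 j k l x y z

/-- The 2-form `e^a ∧ e^b`, evaluated on `(x, y)`. -/
def w2 (a b : Fin 7) (x y : Fin 7 → ℝ) : ℝ := x a * y b - x b * y a


/-- The cross product determined by `phi`. -/
def cr (x y : Fin 7 → ℝ) : Fin 7 → ℝ :=
  ![w2 1 2 x y + w2 3 4 x y + w2 5 6 x y,
    w2 2 0 x y + w2 3 5 x y - w2 4 6 x y,
    w2 0 1 x y - w2 3 6 x y - w2 4 5 x y,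
    w2 4 0 x y + w2 5 1 x y - w2 6 2 x y,
    w2 0 3 x y - w2 6 1 x y - w2 5 2 x y,
    w2 6 0 x y + w2 1 3 x y - w2 2 4 x y,
    w2 0 5 x y - w2 1 4 x y - w2 2 3 x y]

theorem dot7 (x y : Fin 7 → ℝ) : x ⬝ᵥ y =
    x 0 * y 0 + x 1 * y 1 + x 2 * y 2 + x 3 * y 3 + x 4 * y 4 + x 5 * y 5 + x 6 * y 6 := by
  simp [dotProduct, Fin.sum_univ_succ]; ring

theorem ext7 {x y : Fin 7 → ℝ} (h0 : x 0 = y 0) (h1 : x 1 = y 1) (h2 : x 2 = y 2)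
    (h3 : x 3 = y 3) (h4 : x 4 = y 4) (h5 : x 5 = y 5) (h6 : x 6 = y 6) : x = y := by
  funext i
  fin_cases i <;> assumption

theorem cr0 (x y : Fin 7 → ℝ) : cr x y 0 = w2 1 2 x y + w2 3 4 x y + w2 5 6 x y := rfl
theorem cr1 (x y : Fin 7 → ℝ) : cr x y 1 = w2 2 0 x y + w2 3 5 x y - w2 4 6 x y := rfl
theorem cr2 (x y : Fin 7 → ℝ) : cr x y 2 = w2 0 1 x y - w2 3 6 x y - w2 4 5 x y := rfl
theorem cr3 (x y : Fin 7 → ℝ) : cr x y 3 = w2 4 0 x y + w2 5 1 x y - w2 6 2 x y := rfl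
theorem cr4 (x y : Fin 7 → ℝ) : cr x y 4 = w2 0 3 x y - w2 6 1 x y - w2 5 2 x y := rfl
theorem cr5 (x y : Fin 7 → ℝ) : cr x y 5 = w2 6 0 x y + w2 1 3 x y - w2 2 4 x y := rfl
theorem cr6 (x y : Fin 7 → ℝ) : cr x y 6 = w2 0 5 x y - w2 1 4 x y - w2 2 3 x y := rfl

theorem phi_cr (x y z : Fin 7 → ℝ) : phi x y z = cr x y ⬝ᵥ z := by
  simp only [dot7, cr0, cr1, cr2, cr3, cr4, cr5, cr6, phi, w3, w2]; ring

theorem cr_dot (x y z : Fin 7 → ℝ) : cr x y ⬝ᵥ z = x ⬝ᵥ cr y z := by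
  simp only [dot7, cr0, cr1, cr2, cr3, cr4, cr5, cr6, w2]; ring

theorem cr_anti (x y : Fin 7 → ℝ) : cr x y = -cr y x := by
  apply ext7 <;> simp only [Pi.neg_apply, cr0, cr1, cr2, cr3, cr4, cr5, cr6, w2] <;> ring

theorem cr_self (x : Fin 7 → ℝ) : cr x x = 0 := by
  apply ext7 <;> simp only [Pi.zero_apply, cr0, cr1, cr2, cr3, cr4, cr5, cr6, w2] <;> ring

theorem cr_add_left (x y z : Fin 7 → ℝ) : cr (x + y) z = cr x z + cr y z := by
  apply ext7 <;> simp only [Pi.add_apply, cr0, cr1, cr2, cr3, cr4, cr5, cr6, w2] <;> ring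

theorem cr_smul_left (c : ℝ) (x z : Fin 7 → ℝ) : cr (c • x) z = c • cr x z := by
  apply ext7 <;> simp only [Pi.smul_apply, smul_eq_mul, cr0, cr1, cr2, cr3, cr4, cr5, cr6, w2] <;>
    ring

theorem cr_add_right (x y z : Fin 7 → ℝ) : cr z (x + y) = cr z x + cr z y := by
  apply ext7 <;> simp only [Pi.add_apply, cr0, cr1, cr2, cr3, cr4, cr5, cr6, w2] <;> ring

theorem cr_smul_right (c : ℝ) (x z : Fin 7 → ℝ) : cr z (c • x) = c • cr z x := by
  apply ext7 <;> simp only [Pi.smul_apply, smul_eq_mul, cr0, cr1, cr2, cr3, cr4, cr5, cr6, w2] <;>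
    ring

theorem cr_neg_left (x z : Fin 7 → ℝ) : cr (-x) z = - cr x z := by
  have := cr_smul_left (-1) x z
  simpa using this

theorem cr_neg_right (x z : Fin 7 → ℝ) : cr z (-x) = - cr z x := by
  have := cr_smul_right (-1) x z
  simpa using this

theorem cr_cr (x z : Fin 7 → ℝ) : cr x (cr x z) = -(x ⬝ᵥ x) • z + (x ⬝ᵥ z) • x := by
  apply ext7 <;> simp only [Pi.smul_apply, Pi.add_apply, smul_eq_mul, dot7,
    cr0, cr1, cr2, cr3, cr4, cr5, cr6, w2] <;> ring

theorem cr_pol (x y z : Fin 7 → ℝ) : cr x (cr y z) =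
    -cr y (cr x z) - (2 * (x ⬝ᵥ y)) • z + (x ⬝ᵥ z) • y + (y ⬝ᵥ z) • x := by
  apply ext7 <;> simp only [Pi.smul_apply, Pi.add_apply, Pi.sub_apply, Pi.neg_apply, smul_eq_mul,
    dot7, cr0, cr1, cr2, cr3, cr4, cr5, cr6, w2] <;> ring

theorem cr_cr_orth {x z : Fin 7 → ℝ} (hx : x ⬝ᵥ x = 1) (hz : x ⬝ᵥ z = 0) :
    cr x (cr x z) = -z := by
  rw [cr_cr, hx, hz]; simp

theorem cr_pol_orth {x y z : Fin 7 → ℝ} (h1 : x ⬝ᵥ y = 0) (h2 : x ⬝ᵥ z = 0) (h3 : y ⬝ᵥ z = 0) :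
    cr x (cr y z) = -cr y (cr x z) := by
  rw [cr_pol, h1, h2, h3]; simp

/-- Good frame data for a linear map `B`. -/
structure Good (B : (Fin 7 → ℝ) →ₗ[ℝ] (Fin 7 → ℝ)) (u v w : Fin 7 → ℝ) (a b : ℝ) : Prop where
  uu : u ⬝ᵥ u = 1
  vv : v ⬝ᵥ v = 1
  ww : w ⬝ᵥ w = 1
  uv : u ⬝ᵥ v = 0
  uw : u ⬝ᵥ w = 0
  vw : v ⬝ᵥ w = 0
  uvw : u ⬝ᵥ cr v w = 0
  Bu : B u = 0
  Bv : B v = a • cr u v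
  Bw : B w = b • cr u w

theorem dot_cr_left (x y : Fin 7 → ℝ) : x ⬝ᵥ cr x y = 0 := by
  rw [← cr_dot, cr_self, zero_dotProduct]

theorem dot_cr_right (x y : Fin 7 → ℝ) : x ⬝ᵥ cr y x = 0 := by
  rw [cr_anti, dotProduct_neg, dot_cr_left, neg_zero]

theorem Good.swap {B u v w a b} (h : Good B u v w a b) : Good B u w v b a :=
  ⟨h.uu, h.ww, h.vv, h.uw, h.uv, by rw [dotProduct_comm, h.vw],
    by rw [cr_anti, dotProduct_neg, h.uvw, neg_zero], h.Bu, h.Bw, h.Bv⟩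

theorem Good.neg {B u v w a b} (h : Good B u v w a b) : Good B (-u) v w (-a) (-b) :=
  ⟨by simp [h.uu], h.vv, h.ww, by simp [h.uv], by simp [h.uw], h.vw,
    by simp [h.uvw], by simp [h.Bu], by simp [h.Bv, cr_neg_left], by simp [h.Bw, cr_neg_left]⟩

theorem Good.Bvw {B u v w a b} (h : Good B u v w a b)
    (hd : ∀ x y, B (cr x y) = cr (B x) y + cr x (B y)) :
    B (cr v w) = (-(a + b)) • cr u (cr v w) := by
  have h1 : cr (cr u v) w = - cr u (cr v w) := by
    rw [cr_anti, cr_pol_orth (by rw [dotProduct_comm, h.uw]) (by rw [dotProduct_comm, h.vw]) h.uv,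
      cr_anti w v, cr_neg_right, neg_neg]
  have h2 : cr v (cr u w) = - cr u (cr v w) :=
    cr_pol_orth (by rw [dotProduct_comm, h.uv]) h.vw h.uw
  rw [hd, h.Bv, h.Bw, cr_smul_left, cr_smul_right, h1, h2]
  module

theorem Good.rot {B u v w a b} (h : Good B u v w a b)
    (hd : ∀ x y, B (cr x y) = cr (B x) y + cr x (B y)) : Good B u w (cr v w) b (-(a + b)) :=
  ⟨h.uu, h.ww, by rw [cr_dot, cr_anti v w, cr_neg_right, cr_cr_orth h.ww
      (by rw [dotProduct_comm, h.vw]), neg_neg, h.vv], h.uw, h.uvw, dot_cr_right _ _,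
    by rw [cr_anti v w, cr_neg_right, cr_cr_orth h.ww
      (by rw [dotProduct_comm, h.vw]), neg_neg, h.uv], h.Bu, h.Bw, h.Bvw hd⟩

theorem Good.sort {B u v w a b} (h : Good B u v w a b)
    (hd : ∀ x y, B (cr x y) = cr (B x) y + cr x (B y)) :
    ∃ u v w a b, Good B u v w a b ∧ 0 ≤ a ∧ a ≤ b := by
  have key : ∀ {u v w a b}, Good B u v w a b → 0 ≤ a → 0 ≤ b →
      ∃ u v w a b, Good B u v w a b ∧ 0 ≤ a ∧ a ≤ b := by
    intro u v w a b h ha hb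
    rcases le_total a b with hab | hab
    · exact ⟨_, _, _, _, _, h, ha, hab⟩
    · exact ⟨_, _, _, _, _, h.swap, hb, hab⟩
  have h' := h.rot hd
  have h'' := h'.rot hd
  rcases le_total 0 a with ha | ha <;> rcases le_total 0 b with hb | hb <;>
    rcases le_total 0 (a + b) with hc | hc
  · exact key h ha hb
  · exact key h ha hb
  · exact key h'.neg (by linarith) (by linarith)
  · exact key h'' (by linarith) (by linarith)
  · exact key h''.neg (by linarith) (by linarith)
  · exact key h' (by linarith) (by linarith)
  · exact key h.neg (by linarith) (by linarith)
  · exact key h.neg (by linarith) (by linarith)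

/-- the frame map -/
def G (u v w x : Fin 7 → ℝ) : Fin 7 → ℝ :=
  x 0 • u + x 1 • v + x 2 • cr u v + x 3 • w + x 4 • cr u w + x 5 • cr v w + x 6 • cr u (cr v w)

/-- a cross-product table, abstractly -/
theorem table {v0 v1 v3 : Fin 7 → ℝ} (uu : v0 ⬝ᵥ v0 = 1) (vv : v1 ⬝ᵥ v1 = 1) (ww : v3 ⬝ᵥ v3 = 1)
    (uv : v0 ⬝ᵥ v1 = 0) (uw : v0 ⬝ᵥ v3 = 0) (vw : v1 ⬝ᵥ v3 = 0) (uvw : v0 ⬝ᵥ cr v1 v3 = 0) :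
    (∀ x y, cr (G v0 v1 v3 x) (G v0 v1 v3 y) = G v0 v1 v3 (cr x y)) ∧
    (∀ x y, G v0 v1 v3 x ⬝ᵥ G v0 v1 v3 y = x ⬝ᵥ y) := by
  unfold G
  obtain ⟨v2, h2⟩ : ∃ z, z = cr v0 v1 := ⟨_, rfl⟩
  obtain ⟨v4, h4⟩ : ∃ z, z = cr v0 v3 := ⟨_, rfl⟩
  obtain ⟨v5, h5⟩ : ∃ z, z = cr v1 v3 := ⟨_, rfl⟩
  obtain ⟨v6, h6⟩ : ∃ z, z = cr v0 v5 := ⟨_, rfl⟩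
  rw [← h5] at uvw
  rw [← h2, ← h4, ← h5, ← h6]
  have vu : v1 ⬝ᵥ v0 = 0 := by rw [dotProduct_comm, uv]
  have wu : v3 ⬝ᵥ v0 = 0 := by rw [dotProduct_comm, uw]
  have wv : v3 ⬝ᵥ v1 = 0 := by rw [dotProduct_comm, vw]
  have d02 : v0 ⬝ᵥ v2 = 0 := by rw [h2, dot_cr_left]
  have d04 : v0 ⬝ᵥ v4 = 0 := by rw [h4, dot_cr_left]
  have d06 : v0 ⬝ᵥ v6 = 0 := by rw [h6, dot_cr_left]
  have d12 : v1 ⬝ᵥ v2 = 0 := by rw [h2, dot_cr_right]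
  have d15 : v1 ⬝ᵥ v5 = 0 := by rw [h5, dot_cr_left]
  have d35 : v3 ⬝ᵥ v5 = 0 := by rw [h5, dot_cr_right]
  have d34 : v3 ⬝ᵥ v4 = 0 := by rw [h4, dot_cr_right]
  have d56 : v5 ⬝ᵥ v6 = 0 := by rw [h6, dot_cr_right]
  have d23 : v2 ⬝ᵥ v3 = 0 := by rw [h2, cr_dot, ← h5, uvw]
  have d14 : v1 ⬝ᵥ v4 = 0 := by
    rw [h4, ← cr_dot, cr_anti, ← h2, neg_dotProduct, d23, neg_zero]
  have c01 : cr v0 v1 = v2 := h2.symm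
  have c03 : cr v0 v3 = v4 := h4.symm
  have c13 : cr v1 v3 = v5 := h5.symm
  have c05 : cr v0 v5 = v6 := h6.symm
  have c02 : cr v0 v2 = -v1 := by rw [h2, cr_cr_orth uu uv]
  have c04 : cr v0 v4 = -v3 := by rw [h4, cr_cr_orth uu uw]
  have c06 : cr v0 v6 = -v5 := by rw [h6, cr_cr_orth uu uvw]
  have c12 : cr v1 v2 = v0 := by rw [h2, cr_anti v0, cr_neg_right, cr_cr_orth vv vu, neg_neg]
  have c14 : cr v1 v4 = -v6 := by rw [h4, cr_pol_orth vu vw uw, c13, c05]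
  have c15 : cr v1 v5 = -v3 := by rw [h5, cr_cr_orth vv vw]
  have c16 : cr v1 v6 = v4 := by rw [h6, cr_pol_orth vu d15 uvw, c15, cr_neg_right, c03, neg_neg]
  have c23 : cr v2 v3 = -v6 := by
    rw [cr_anti, h2, cr_pol_orth wu wv uv, cr_anti v3 v1, c13, cr_neg_right, c05, neg_neg]
  have d20 : v2 ⬝ᵥ v0 = 0 := by rw [dotProduct_comm, d02]
  have d21 : v2 ⬝ᵥ v1 = 0 := by rw [dotProduct_comm, d12]
  have d25 : v2 ⬝ᵥ v5 = 0 := by rw [h5, ← cr_dot, cr_anti, c12, neg_dotProduct, uw, neg_zero]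
  have c24 : cr v2 v4 = -v5 := by
    rw [h4, cr_pol_orth d20 d23 uw, c23, cr_neg_right, c06, neg_neg]
  have c25 : cr v2 v5 = v4 := by
    rw [h5, cr_pol_orth d21 d23 vw, c23, cr_neg_right, c16, neg_neg]
  have c26 : cr v2 v6 = v3 := by
    rw [h6, cr_pol_orth d20 d25 uvw, c25, c04, neg_neg]
  have c34 : cr v3 v4 = v0 := by rw [h4, cr_anti v0, cr_neg_right, cr_cr_orth ww wu, neg_neg]
  have c35 : cr v3 v5 = v1 := by rw [h5, cr_anti v1, cr_neg_right, cr_cr_orth ww wv, neg_neg]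
  have c36 : cr v3 v6 = -v2 := by rw [h6, cr_pol_orth wu d35 uvw, c35, c01]
  have d41 : v4 ⬝ᵥ v1 = 0 := by rw [dotProduct_comm, d14]
  have d43 : v4 ⬝ᵥ v3 = 0 := by rw [dotProduct_comm, d34]
  have d40 : v4 ⬝ᵥ v0 = 0 := by rw [dotProduct_comm, d04]
  have d50 : v5 ⬝ᵥ v0 = 0 := by rw [dotProduct_comm, uvw]
  have d45 : v4 ⬝ᵥ v5 = 0 := by rw [h5, ← cr_dot, cr_anti, c14, neg_neg, h6, cr_dot, cr_anti, c35]; simp [uv]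
  have c45 : cr v4 v5 = -v2 := by
    rw [h5, cr_pol_orth d41 d43 vw, cr_anti v4 v3, c34, cr_neg_right, cr_anti, c01, neg_neg]
  have c46 : cr v4 v6 = -v1 := by
    rw [h6, cr_pol_orth d40 d45 uvw, c45, cr_neg_right, c02, neg_neg]
  have d55 : v5 ⬝ᵥ v5 = 1 := by rw [h5, ← cr_dot, ← h5, cr_anti, c15, neg_neg, ww]
  have c56 : cr v5 v6 = v0 := by
    rw [h6, cr_anti v0, cr_neg_right, cr_cr_orth d55 d50, neg_neg]
  have d22 : v2 ⬝ᵥ v2 = 1 := by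
    nth_rewrite 2 [h2]
    rw [← cr_dot, cr_anti, c02, neg_neg, vv]
  have d44 : v4 ⬝ᵥ v4 = 1 := by
    nth_rewrite 2 [h4]
    rw [← cr_dot, cr_anti, c04, neg_neg, ww]
  have d66 : v6 ⬝ᵥ v6 = 1 := by
    nth_rewrite 2 [h6]
    rw [← cr_dot, cr_anti, c06, neg_neg, d55]
  have d16 : v1 ⬝ᵥ v6 = 0 := by rw [h6, ← cr_dot, cr_anti, c01, neg_dotProduct, d25, neg_zero]
  have d24 : v2 ⬝ᵥ v4 = 0 := by rw [h4, ← cr_dot, cr_anti, c02, neg_neg, vw]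
  have d26 : v2 ⬝ᵥ v6 = 0 := by rw [h6, ← cr_dot, cr_anti, c02, neg_neg, d15]
  have d36 : v3 ⬝ᵥ v6 = 0 := by rw [h6, ← cr_dot, cr_anti, c03, neg_dotProduct, d45, neg_zero]
  have d46 : v4 ⬝ᵥ v6 = 0 := by rw [h6, ← cr_dot, cr_anti, c04, neg_neg, d35]
  have s : ∀ {p q r : Fin 7 → ℝ}, cr p q = r → cr q p = -r := by
    rintro p q r rfl; exact cr_anti _ _
  have t : ∀ {p q : Fin 7 → ℝ}, p ⬝ᵥ q = 0 → q ⬝ᵥ p = 0 := by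
    intro p q h; rw [dotProduct_comm, h]
  constructor
  · intro x y
    simp only [cr_add_left, cr_add_right, cr_smul_left, cr_smul_right, cr_self,
      c01, c02, c03, c04, c05, c06, c12, c13, c14, c15, c16, c23, c24, c25, c26, c34, c35, c36,
      c45, c46, c56, s c01, s c02, s c03, s c04, s c05, s c06, s c12, s c13, s c14, s c15, s c16,
      s c23, s c24, s c25, s c26, s c34, s c35, s c36, s c45, s c46, s c56]
    simp only [cr0, cr1, cr2, cr3, cr4, cr5, cr6, w2]
    module
  · intro x y
    simp only [add_dotProduct, dotProduct_add, smul_dotProduct, dotProduct_smul, smul_eq_mul,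
      uu, vv, ww, d22, d44, d55, d66, uv, uw, vw, uvw, d02, d04, d06, d12, d14, d15, d16,
      d23, d24, d25, d26, d34, d35, d36, d45, d46, d56,
      t uv, t uw, t vw, t uvw, t d02, t d04, t d06, t d12, t d14, t d15, t d16,
      t d23, t d24, t d25, t d26, t d34, t d35, t d36, t d45, t d46, t d56, dot7 x y]
    ring


theorem eigen (S : (Fin 7 → ℝ) →ₗ[ℝ] (Fin 7 → ℝ)) (hS : ∀ x y, S x ⬝ᵥ y = x ⬝ᵥ S y)
    (p q r : Fin 7 → ℝ) (hp : ∃ c : ℝ, S p = c • p) (hq : ∃ c : ℝ, S q = c • q)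
    (hr : ∃ c : ℝ, S r = c • r) :
    ∃ (w : Fin 7 → ℝ) (c : ℝ), w ⬝ᵥ w = 1 ∧ S w = c • w ∧ p ⬝ᵥ w = 0 ∧ q ⬝ᵥ w = 0 ∧ r ⬝ᵥ w = 0 := by
  let L : EuclideanSpace ℝ (Fin 7) ≃ₗ[ℝ] (Fin 7 → ℝ) := WithLp.linearEquiv 2 ℝ (Fin 7 → ℝ)
  have hin : ∀ x y : EuclideanSpace ℝ (Fin 7), inner ℝ x y = L x ⬝ᵥ L y := by
    intro x y
    rw [EuclideanSpace.inner_eq_star_dotProduct, dotProduct_comm]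
    rfl
  let T : EuclideanSpace ℝ (Fin 7) →ₗ[ℝ] EuclideanSpace ℝ (Fin 7) :=
    L.symm.toLinearMap ∘ₗ S ∘ₗ L.toLinearMap
  have hLT : ∀ x, L (T x) = S (L x) := by intro x; simp [T]
  have hT : T.IsSymmetric := by
    intro x y
    rw [hin, hin, hLT, hLT, hS]
  let M : Matrix (Fin 3) (Fin 7) ℝ := Matrix.of ![p, q, r]
  let F : EuclideanSpace ℝ (Fin 7) →ₗ[ℝ] (Fin 3 → ℝ) := M.mulVecLin ∘ₗ L.toLinearMap
  let W := LinearMap.ker F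
  have hW : ∀ x, x ∈ W ↔ p ⬝ᵥ L x = 0 ∧ q ⬝ᵥ L x = 0 ∧ r ⬝ᵥ L x = 0 := by
    intro x
    simp only [W, F, M, LinearMap.mem_ker, LinearMap.comp_apply, Matrix.mulVecLin_apply,
      funext_iff, Fin.forall_fin_succ]
    simp [Matrix.mulVec]
  have hinv : ∀ {z : Fin 7 → ℝ} {x}, (∃ c : ℝ, S z = c • z) → z ⬝ᵥ L x = 0 →
      z ⬝ᵥ L (T x) = 0 := by
    rintro z x ⟨c, hc⟩ h
    rw [hLT, ← hS, hc, smul_dotProduct, h, smul_zero]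
  have hTW : ∀ x ∈ W, T x ∈ W := by
    intro x hx
    rw [hW] at hx ⊢
    exact ⟨hinv hp hx.1, hinv hq hx.2.1, hinv hr hx.2.2⟩
  have hne : W ≠ ⊥ := by
    apply LinearMap.ker_ne_bot_of_finrank_lt
    simp
  haveI : Nontrivial W := Submodule.nontrivial_iff_ne_bot.mpr hne
  have hev := (hT.restrict_invariant hTW).hasEigenvalue_iSup_of_finiteDimensional
  obtain ⟨x, hx⟩ := hev.exists_hasEigenvector
  generalize (⨆ x : { x : W // x ≠ 0 }, _ : ℝ) = c at hx
  have hx1 := hx.apply_eq_smul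
  have hx2 := hx.2
  have hx3 : T x = c • (x : EuclideanSpace ℝ (Fin 7)) := congrArg Subtype.val hx1
  have hx4 : (x : EuclideanSpace ℝ (Fin 7)) ≠ 0 := by simpa using hx2
  obtain ⟨h1, h2, h3⟩ := (hW x).1 x.2
  have h5 : 0 < L x ⬝ᵥ L x := by
    rw [← hin, real_inner_self_eq_norm_sq]
    have := norm_pos_iff.mpr hx4
    positivity
  have h6 : S (L x) = c • L x := by rw [← hLT, hx3, map_smul]
  refine ⟨(Real.sqrt (L x ⬝ᵥ L x))⁻¹ • L x, c, ?_, ?_, ?_, ?_, ?_⟩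
  · have h7 := Real.mul_self_sqrt h5.le
    have h8 := Real.sqrt_pos.mpr h5
    rw [smul_dotProduct, dotProduct_smul, smul_eq_mul, smul_eq_mul]
    nth_rewrite 3 [← h7]
    field_simp
  · rw [map_smul, h6, smul_comm]
  · rw [dotProduct_smul, h1, smul_zero]
  · rw [dotProduct_smul, h2, smul_zero]
  · rw [dotProduct_smul, h3, smul_zero]

theorem exists_good (B : (Fin 7 → ℝ) →ₗ[ℝ] (Fin 7 → ℝ)) (hB : ∀ x y, B x ⬝ᵥ y = -(x ⬝ᵥ B y))
    (hd : ∀ x y, B (cr x y) = cr (B x) y + cr x (B y)) :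
    ∃ u v w a b, Good B u v w a b := by
  obtain ⟨u, uu, Bu⟩ : ∃ u, u ⬝ᵥ u = 1 ∧ B u = 0 := by
    have hdet : (LinearMap.toMatrix' B).det = 0 := by
      have ht : (LinearMap.toMatrix' B)ᵀ = -(LinearMap.toMatrix' B) := by
        ext i j
        have := hB (Pi.single i 1) (Pi.single j 1)
        simpa [LinearMap.toMatrix'_apply] using this
      have := congrArg Matrix.det ht
      rw [Matrix.det_transpose, Matrix.det_neg] at this
      have h7 : (-1 : ℝ) ^ (Fintype.card (Fin 7)) = -1 := by
        rw [Fintype.card_fin]; norm_num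
      rw [h7] at this
      linarith
    obtain ⟨x, hx, hx0⟩ := Matrix.exists_mulVec_eq_zero_iff.mpr hdet
    rw [LinearMap.toMatrix'_mulVec] at hx0
    have h5 : 0 < x ⬝ᵥ x := lt_of_le_of_ne
      (by rw [dot7]; nlinarith [mul_self_nonneg (x 0), mul_self_nonneg (x 1), mul_self_nonneg (x 2),
            mul_self_nonneg (x 3), mul_self_nonneg (x 4), mul_self_nonneg (x 5),
            mul_self_nonneg (x 6)])
      (fun h => hx (dotProduct_self_eq_zero.mp h.symm))
    refine ⟨(Real.sqrt (x ⬝ᵥ x))⁻¹ • x, ?_, by rw [map_smul, hx0, smul_zero]⟩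
    have h7 := Real.mul_self_sqrt h5.le
    have h8 := Real.sqrt_pos.mpr h5
    rw [smul_dotProduct, dotProduct_smul, smul_eq_mul, smul_eq_mul]
    nth_rewrite 3 [← h7]
    field_simp
  let J : (Fin 7 → ℝ) →ₗ[ℝ] (Fin 7 → ℝ) :=
    { toFun := cr u
      map_add' := fun x y => cr_add_right x y u
      map_smul' := fun c x => cr_smul_right c x u }
  let S := -(J ∘ₗ B)
  have hSx : ∀ x, S x = -cr u (B x) := fun x => rfl
  have hcomm : ∀ x, B (cr u x) = cr u (B x) := by
    intro x
    rw [hd, Bu]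
    have : cr 0 x = 0 := by simpa using cr_smul_left 0 0 x
    rw [this, zero_add]
  have hS : ∀ x y, S x ⬝ᵥ y = x ⬝ᵥ S y := by
    intro x y
    rw [hSx, hSx, ← hcomm y, neg_dotProduct, dotProduct_neg, cr_anti, neg_dotProduct, cr_dot, hB]
    ring
  have hJ0 : cr u 0 = 0 := map_zero J
  have hSu : S u = (0 : ℝ) • u := by rw [hSx, Bu, hJ0]; simp
  have cnv : ∀ {x : Fin 7 → ℝ} {c : ℝ}, S x = c • x → u ⬝ᵥ x = 0 → B x = c • cr u x := by
    intro x c h hx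
    have h1 : cr u (S x) = c • cr u x := by rw [h, cr_smul_right]
    have h2 : u ⬝ᵥ B x = 0 := by
      have := hB u x
      rw [Bu, zero_dotProduct] at this
      linarith
    rw [← h1, hSx, cr_neg_right, cr_cr_orth uu h2, neg_neg]
  obtain ⟨v, a, vv, Sv, uv, -, -⟩ := eigen S hS u u u ⟨_, hSu⟩ ⟨_, hSu⟩ ⟨_, hSu⟩
  have Sj : S (cr u v) = a • cr u v := by
    rw [← cr_smul_right, ← Sv, hSx, hSx, hcomm, cr_neg_right]
  obtain ⟨w, b, ww, Sw, uw, vw, h⟩ := eigen S hS u v (cr u v) ⟨_, hSu⟩ ⟨_, Sv⟩ ⟨_, Sj⟩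
  exact ⟨u, v, w, a, b, uu, vv, ww, uv, uw, vw, by rw [← cr_dot, h], Bu, cnv Sv uv, cnv Sw uw⟩

theorem normal_form (B : (Fin 7 → ℝ) →ₗ[ℝ] (Fin 7 → ℝ)) (hB : ∀ x y, B x ⬝ᵥ y = -(x ⬝ᵥ B y))
    (hd : ∀ x y, B (cr x y) = cr (B x) y + cr x (B y)) :
    ∃ g : GL (Fin 7) ℝ, ∃ lam₁ lam₂ : ℝ, 0 ≤ lam₁ ∧ lam₁ ≤ lam₂ ∧
      (∀ x y z : Fin 7 → ℝ,
        phi ((g : Matrix (Fin 7) (Fin 7) ℝ).mulVec x)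
            ((g : Matrix (Fin 7) (Fin 7) ℝ).mulVec y)
            ((g : Matrix (Fin 7) (Fin 7) ℝ).mulVec z) = phi x y z) ∧
      (∀ x y : Fin 7 → ℝ,
        B ((g : Matrix (Fin 7) (Fin 7) ℝ).mulVec x) ⬝ᵥ
            ((g : Matrix (Fin 7) (Fin 7) ℝ).mulVec y)
          = lam₁ * w2 1 2 x y + lam₂ * w2 3 4 x y - (lam₁ + lam₂) * w2 5 6 x y) := by
  obtain ⟨_, _, _, _, _, h0⟩ := exists_good B hB hd
  obtain ⟨u, v, w, a, b, h, ha, hab⟩ := h0.sort hd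
  obtain ⟨hc, hdot⟩ := table h.uu h.vv h.ww h.uv h.uw h.vw h.uvw
  let g : Matrix (Fin 7) (Fin 7) ℝ := Matrix.of fun i j =>
    (![u, v, cr u v, w, cr u w, cr v w, cr u (cr v w)] : Fin 7 → Fin 7 → ℝ) j i
  have hg : ∀ x, g.mulVec x = G u v w x := by
    intro x
    funext i
    simp [g, Matrix.mulVec, dotProduct, Fin.sum_univ_succ, G]
    ring
  have hgg : gᵀ * g = 1 := by
    apply Matrix.ext_of_mulVec_single
    intro j
    apply dotProduct_eq
    intro z
    rw [← Matrix.mulVec_mulVec, Matrix.mulVec_transpose, ← Matrix.dotProduct_mulVec, hg, hg, hdot,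
      Matrix.one_mulVec]
  have hcomm : ∀ x, B (cr u x) = cr u (B x) := by
    intro x
    rw [hd, h.Bu]
    have : cr 0 x = 0 := by simpa using cr_smul_left 0 0 x
    rw [this, zero_add]
  have hBG : ∀ x, B (G u v w x) = G u v w
      ![0, -(a * x 2), a * x 1, -(b * x 4), b * x 3, (a + b) * x 6, -((a + b) * x 5)] := by
    intro x
    simp only [G, map_add, map_smul, hcomm, h.Bu, h.Bv, h.Bw, h.Bvw hd, cr_smul_right,
      cr_cr_orth h.uu h.uv, cr_cr_orth h.uu h.uw, cr_cr_orth h.uu h.uvw]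
    simp
    module
  refine ⟨⟨g, gᵀ, mul_eq_one_comm.mp hgg, hgg⟩, a, b, ha, hab, ?_, ?_⟩
  · intro x y z
    simp only [hg, phi_cr, hc, hdot]
  · intro x y
    simp only [hg, hBG, hdot, dot7, w2]
    simp
    ring

theorem eps_cr (i j k : Fin 7) : eps i j k = cr (e j) (e k) i := by
  rw [eps, phi_cr, cr_dot, dotProduct_comm]
  simp [dotProduct, e]

/-- The linear map of a matrix (acting on rows). -/
def Bm (m : Fin 7 → Fin 7 → ℝ) : (Fin 7 → ℝ) →ₗ[ℝ] (Fin 7 → ℝ) :=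
  Matrix.vecMulLinear (Matrix.of m)

theorem Bm_apply (m : Fin 7 → Fin 7 → ℝ) (x : Fin 7 → ℝ) (j : Fin 7) :
    Bm m x j = x 0 * m 0 j + x 1 * m 1 j + x 2 * m 2 j + x 3 * m 3 j + x 4 * m 4 j
      + x 5 * m 5 j + x 6 * m 6 j := by
  simp [Bm, Matrix.vecMul, dot7]

theorem Bm_skew (m : Fin 7 → Fin 7 → ℝ) (anti : ∀ i j, m i j = -m j i) (x y : Fin 7 → ℝ) :
    Bm m x ⬝ᵥ y = -(x ⬝ᵥ Bm m y) := by
  have dg : ∀ i, m i i = 0 := fun i => by linarith [anti i i]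
  simp only [dot7, Bm_apply, dg 0, dg 1, dg 2, dg 3, dg 4, dg 5, dg 6,
    anti 1 0, anti 2 0, anti 3 0, anti 4 0, anti 5 0, anti 6 0, anti 2 1, anti 3 1, anti 4 1, anti 5 1, anti 6 1, anti 3 2, anti 4 2, anti 5 2, anti 6 2, anti 4 3, anti 5 3, anti 6 3, anti 5 4, anti 6 4, anti 6 5]
  ring

theorem Bm_der (m : Fin 7 → Fin 7 → ℝ) (anti : ∀ i j, m i j = -m j i)
    (h : ∀ i, ∑ j, ∑ k, eps i j k * m j k = 0) (x y : Fin 7 → ℝ) :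
    Bm m (cr x y) = cr (Bm m x) y + cr x (Bm m y) := by
  have dg : ∀ i, m i i = 0 := fun i => by linarith [anti i i]
  have hw : ∀ a b, ∑ j, ∑ k, w2 a b (e j) (e k) * m j k = m a b - m b a := by
    intro a b
    simp [w2, e, sub_mul, Finset.sum_sub_distrib, ite_and]
  have r0 : m 5 6 = -m 1 2 - m 3 4 := by
    have := h 0
    simp only [eps_cr, cr0, add_mul, sub_mul, Finset.sum_add_distrib, Finset.sum_sub_distrib, hw] at this
    linarith [anti 1 2, anti 3 4, anti 5 6]
  have r1 : m 4 6 = -m 0 2 + m 3 5 := by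
    have := h 1
    simp only [eps_cr, cr1, add_mul, sub_mul, Finset.sum_add_distrib, Finset.sum_sub_distrib, hw] at this
    linarith [anti 2 0, anti 3 5, anti 4 6]
  have r2 : m 4 5 = m 0 1 - m 3 6 := by
    have := h 2
    simp only [eps_cr, cr2, add_mul, sub_mul, Finset.sum_add_distrib, Finset.sum_sub_distrib, hw] at this
    linarith [anti 0 1, anti 3 6, anti 4 5]
  have r3 : m 2 6 = m 0 4 + m 1 5 := by
    have := h 3
    simp only [eps_cr, cr3, add_mul, sub_mul, Finset.sum_add_distrib, Finset.sum_sub_distrib, hw] at this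
    linarith [anti 4 0, anti 5 1, anti 6 2]
  have r4 : m 2 5 = -m 0 3 - m 1 6 := by
    have := h 4
    simp only [eps_cr, cr4, add_mul, sub_mul, Finset.sum_add_distrib, Finset.sum_sub_distrib, hw] at this
    linarith [anti 0 3, anti 6 1, anti 5 2]
  have r5 : m 2 4 = -m 0 6 + m 1 3 := by
    have := h 5
    simp only [eps_cr, cr5, add_mul, sub_mul, Finset.sum_add_distrib, Finset.sum_sub_distrib, hw] at this
    linarith [anti 6 0, anti 1 3, anti 2 4]
  have r6 : m 2 3 = m 0 5 - m 1 4 := by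
    have := h 6
    simp only [eps_cr, cr6, add_mul, sub_mul, Finset.sum_add_distrib, Finset.sum_sub_distrib, hw] at this
    linarith [anti 0 5, anti 1 4, anti 2 3]
  apply ext7 <;> simp only [Pi.add_apply, cr0, cr1, cr2, cr3, cr4, cr5, cr6, w2, Bm_apply,
    dg 0, dg 1, dg 2, dg 3, dg 4, dg 5, dg 6,
    anti 1 0, anti 2 0, anti 3 0, anti 4 0, anti 5 0, anti 6 0, anti 2 1, anti 3 1, anti 4 1, anti 5 1, anti 6 1, anti 3 2, anti 4 2, anti 5 2, anti 6 2, anti 4 3, anti 5 3, anti 6 3, anti 5 4, anti 6 4, anti 6 5,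
    r0, r1, r2, r3, r4, r5, r6] <;> ring

/-- every `β` in `Λ²₁₄` is conjugate, under an element of the stabilizer of
`φ`, to a normal form `λ₁ e²∧e³ + λ₂ e⁴∧e⁵ − (λ₁+λ₂) e⁶∧e⁷` with `0 ≤ λ₁ ≤ λ₂`.
(Indices are shifted to start at 0, so `e²∧e³` is `w2 1 2`, etc.) -/
theorem Lambda2_14_normal_form (β : AlternatingMap ℝ (Fin 7 → ℝ) ℝ (Fin 2))
    (hβ : ∀ i : Fin 7, ∑ j : Fin 7, ∑ k : Fin 7, eps i j k * β ![e j, e k] = 0) :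
    ∃ g : GL (Fin 7) ℝ, ∃ lam₁ lam₂ : ℝ, 0 ≤ lam₁ ∧ lam₁ ≤ lam₂ ∧
      (∀ x y z : Fin 7 → ℝ,
        phi ((g : Matrix (Fin 7) (Fin 7) ℝ).mulVec x)
            ((g : Matrix (Fin 7) (Fin 7) ℝ).mulVec y)
            ((g : Matrix (Fin 7) (Fin 7) ℝ).mulVec z) = phi x y z) ∧
      (∀ x y : Fin 7 → ℝ,
        β ![(g : Matrix (Fin 7) (Fin 7) ℝ).mulVec x,
            (g : Matrix (Fin 7) (Fin 7) ℝ).mulVec y]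
          = lam₁ * w2 1 2 x y + lam₂ * w2 3 4 x y - (lam₁ + lam₂) * w2 5 6 x y) := by
  have swap : ∀ x y : Fin 7 → ℝ, β ![x, y] = -β ![y, x] := by
    intro x y
    have := β.map_swap ![y, x] (i := 0) (j := 1) (by decide)
    rw [← this]
    congr 1
    funext i
    fin_cases i <;> rfl
  have hexp : ∀ x : Fin 7 → ℝ, x = ∑ j, x j • e j := by
    intro x
    funext i
    simp [e]
  have hl : ∀ y : Fin 7 → ℝ, ∃ F : (Fin 7 → ℝ) →ₗ[ℝ] ℝ, ∀ x, F x = β ![x, y] := by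
    intro y
    refine ⟨{ toFun := fun x => β ![x, y], map_add' := ?_, map_smul' := ?_ }, fun x => rfl⟩
    · intro p q
      exact β.map_vecCons_add ![y] p q
    · intro c p
      exact β.map_vecCons_smul ![y] c p
  have hlin : ∀ x y : Fin 7 → ℝ, β ![x, y] = ∑ j, x j * β ![e j, y] := by
    intro x y
    obtain ⟨F, hF⟩ := hl y
    simp only [← hF]
    conv_lhs => rw [hexp x]
    simp
  have hB : ∀ x y, β ![x, y] = Bm (fun i j => β ![e i, e j]) x ⬝ᵥ y := by
    intro x y
    have h1 : ∀ j, β ![x, e j] = Bm (fun i j => β ![e i, e j]) x j := by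
      intro j
      rw [hlin, Bm_apply, Fin.sum_univ_seven]
    simp only [dotProduct, ← h1]
    rw [swap, hlin y x, ← Finset.sum_neg_distrib]
    refine Finset.sum_congr rfl fun j _ => ?_
    rw [swap (e j) x]
    ring
  obtain ⟨g, a, b, ha, hab, h1, h2⟩ := normal_form (Bm (fun i j => β ![e i, e j]))
    (Bm_skew _ fun i j => swap _ _) (Bm_der _ (fun i j => swap _ _) hβ)
  exact ⟨g, a, b, ha, hab, h1, fun x y => (hB _ _).trans (h2 x y)⟩

end G2

end
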